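/- arXiv:2202.09956 — 6 statements merged into one kernel-verified Lean document; each statement's English description precedes it below -/
import Mathlib

section
/- Fix 0 < α < 1 and let r(z) = (−z)^{−α} for z < 0. Set b̃ = min{ −(2α²)^{1/(2(α+1))}, −(2α³/(1−α))^{1/(2(α+1))} }. Then for every z < b̃ one has 0 < r'(z) ≤ 1/√2 and r(z)·r''(z) > 2·r'(z)²·(r'(z)²+1). -/
theorem aux_deriv (c β z : ℝ) (hz : z < 0) :
    deriv (fun z : ℝ => c * (-z) ^ β) z = c * (-β) * (-z) ^ (β - 1) := by
  have h : HasDerivAt (fun z : ℝ => (-z) ^ β) ((-1) * β * (-z) ^ (β - 1)) z :=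
    (hasDerivAt_neg z).rpow_const (Or.inl (by linarith))
  rw [(h.const_mul c).deriv]
  ring

theorem aux_pow (α a x : ℝ) (hα0 : 0 < α) (ha : 0 ≤ a) (hx : 0 < x)
    (h : a ^ (1 / (2 * (α + 1))) < x) : a < (x ^ (α + 1)) ^ 2 := by
  have hs : 0 < 2 * (α + 1) := by linarith
  have h1 := Real.rpow_lt_rpow (Real.rpow_nonneg ha _) h hs
  rw [← Real.rpow_mul ha, one_div, inv_mul_cancel₀ hs.ne', Real.rpow_one] at h1
  rw [← Real.rpow_natCast, ← Real.rpow_mul hx.le]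
  convert h1 using 2
  push_cast
  ring


/-- For `0 < α < 1`, `r(z) = (−z)^{−α}` on `(−∞,0)` and
`b̃ = min{ −(2α²)^{1/(2(α+1))}, −(2α³/(1−α))^{1/(2(α+1))} }`, every `z < b̃` satisfies
the conditions of Setting RS: `0 < r'(z) ≤ 1/√2` and
`r(z)·r''(z) > 2·r'(z)²·(r'(z)²+1)`. -/
theorem settingRS_of_rpow (α : ℝ) (hα0 : 0 < α) (hα1 : α < 1) :
    let r : ℝ → ℝ := fun z => (-z) ^ (-α)
    let btilde : ℝ := min (-((2 * α ^ 2) ^ (1 / (2 * (α + 1)))))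
                          (-((2 * α ^ 3 / (1 - α)) ^ (1 / (2 * (α + 1)))))
    ∀ z < btilde,
      (0 < deriv r z ∧ deriv r z ≤ 1 / Real.sqrt 2) ∧
      r z * deriv (deriv r) z > 2 * (deriv r z) ^ 2 * ((deriv r z) ^ 2 + 1) := by
  intro r btilde z hz
  have hz1 : z < -((2 * α ^ 2) ^ (1 / (2 * (α + 1)))) := lt_of_lt_of_le hz (min_le_left _ _)
  have hz2 : z < -((2 * α ^ 3 / (1 - α)) ^ (1 / (2 * (α + 1)))) :=
    lt_of_lt_of_le hz (min_le_right _ _)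
  have hb : 0 < 1 - α := by linarith
  have hpos : 0 < (2 * α ^ 2) ^ (1 / (2 * (α + 1))) := by positivity
  have hz0 : z < 0 := by linarith
  have hx : 0 < -z := by linarith
  have h1 := aux_pow α (2 * α ^ 2) (-z) hα0 (by positivity) hx (by linarith)
  have h2 := aux_pow α (2 * α ^ 3 / (1 - α)) (-z) hα0 (by positivity) hx (by linarith)
  have hd : ∀ w < 0, deriv r w = α * (-w) ^ (-α - 1) := by
    intro w hw
    have := aux_deriv 1 (-α) w hw
    simpa [r] using this
  have hdd : deriv (deriv r) z = α * (α + 1) * (-z) ^ (-α - 1 - 1) := by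
    have he : deriv r =ᶠ[nhds z] fun w => α * (-w) ^ (-α - 1) := by
      filter_upwards [Iio_mem_nhds hz0] with w hw using hd w hw
    rw [he.deriv_eq, aux_deriv α (-α - 1) z hz0]
    ring
  have hq : 0 < (-z) ^ (α + 1) := by positivity
  have hp : (-z) ^ (-α - 1) = ((-z) ^ (α + 1))⁻¹ := by
    rw [← Real.rpow_neg hx.le]
    congr 1
    ring
  have hrr : r z * deriv (deriv r) z = α * (α + 1) * (((-z) ^ (α + 1))⁻¹) ^ 2 := by
    rw [hdd, ← hp]
    have : (-z) ^ (-α) * (-z) ^ (-α - 1 - 1) = ((-z) ^ (-α - 1)) ^ 2 := by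
      rw [sq, ← Real.rpow_add hx, ← Real.rpow_add hx]
      congr 1
      ring
    rw [← this]
    simp only [r]
    ring
  rw [hrr, hd z hz0, hp]
  generalize (-z) ^ (α + 1) = q at *
  have hpp : 0 < q⁻¹ := by positivity
  have hpq : q⁻¹ * q = 1 := inv_mul_cancel₀ hq.ne'
  rw [div_lt_iff₀ hb] at h2
  generalize q⁻¹ = p at *
  have hpq2 : p ^ 2 * q ^ 2 = 1 := by rw [← mul_pow, hpq, one_pow]
  have hp2 : 0 < p ^ 2 := by positivity
  have k1 : 2 * α ^ 2 * p ^ 2 < 1 := by nlinarith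
  have k2 : 2 * α ^ 3 * p ^ 2 < 1 - α := by
    have := mul_lt_mul_of_pos_left h2 hp2
    have e : p ^ 2 * (q ^ 2 * (1 - α)) = 1 - α := by rw [← mul_assoc, hpq2, one_mul]
    linarith
  refine ⟨⟨by positivity, ?_⟩, ?_⟩
  · rw [le_div_iff₀ (by positivity)]
    refine abs_le_of_sq_le_sq' ?_ zero_le_one |>.2
    rw [mul_pow, Real.sq_sqrt (by norm_num)]
    nlinarith
  · have := mul_pos (mul_pos hα0 hp2) (sub_pos.2 k2)
    nlinarith
end

section
/- Let r(z) = e^{−1/z} for z < 0. Then there exists b̃ < 0 such that for every z < b̃ one has 0 < r'(z) ≤ 1/√2 and r(z)·r''(z) > 2·r'(z)²·(r'(z)²+1). -/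
/-- For `r(z) = e^{−1/z}` on `(−∞,0)` there exists `b̃ < 0` such that every `z < b̃`
satisfies the conditions of Setting RS: `0 < r'(z) ≤ 1/√2` and
`r(z)·r''(z) > 2·r'(z)²·(r'(z)²+1)`. -/
theorem settingRS_of_exp :
    let r : ℝ → ℝ := fun z => Real.exp (-1 / z)
    ∃ btilde < (0 : ℝ), ∀ z < btilde,
      (0 < deriv r z ∧ deriv r z ≤ 1 / Real.sqrt 2) ∧
      r z * deriv (deriv r) z > 2 * (deriv r z) ^ 2 * ((deriv r z) ^ 2 + 1) := by
  intro r
  have hr : ∀ z : ℝ, r z = Real.exp (-z⁻¹) := by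
    intro z
    simp only [r]
    congr 1
    ring
  have hr0 : r = fun z => Real.exp (-z⁻¹) := funext hr
  have h1 : ∀ z : ℝ, z < 0 → HasDerivAt r (Real.exp (-z⁻¹) * (z⁻¹) ^ 2) z := by
    intro z hz
    rw [hr0]
    have : HasDerivAt (fun z : ℝ => Real.exp (-z⁻¹)) (Real.exp (-z⁻¹) * - -(z ^ 2)⁻¹) z :=
      ((hasDerivAt_inv hz.ne).neg).exp
    rw [neg_neg, ← inv_pow] at this
    exact this
  have h2 : ∀ z : ℝ, z < 0 → HasDerivAt (deriv r)
      (Real.exp (-z⁻¹) * ((z⁻¹) ^ 4 - 2 * (z⁻¹) ^ 3)) z := by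
    intro z hz
    have hev : deriv r =ᶠ[nhds z] fun z => Real.exp (-z⁻¹) * (z⁻¹) ^ 2 := by
      filter_upwards [Iio_mem_nhds hz] with y hy
      exact (h1 y hy).deriv
    refine HasDerivAt.congr_of_eventuallyEq ?_ hev
    have hi := hasDerivAt_inv hz.ne
    have he : HasDerivAt (fun z : ℝ => Real.exp (-z⁻¹)) (Real.exp (-z⁻¹) * (z⁻¹) ^ 2) z := by
      rw [← hr0]
      exact h1 z hz
    have : HasDerivAt (fun z : ℝ => Real.exp (-z⁻¹) * (z⁻¹) ^ 2)
        (Real.exp (-z⁻¹) * (z⁻¹) ^ 2 * (z⁻¹) ^ 2 +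
          Real.exp (-z⁻¹) * (((2 : ℕ) : ℝ) * (z⁻¹) ^ (2 - 1) * -(z ^ 2)⁻¹)) z :=
      he.mul (hi.pow 2)
    refine this.congr_deriv ?_
    rw [← inv_pow]
    push_cast
    ring
  refine ⟨-4, by norm_num, fun z hz => ?_⟩
  have hz0 : z < 0 := by linarith
  rw [(h2 z hz0).deriv, (h1 z hz0).deriv, hr]
  obtain ⟨w, hw⟩ : ∃ w, w = -z⁻¹ := ⟨_, rfl⟩
  have hzw : z⁻¹ = -w := by rw [hw]; ring
  have hwz : w * z = -1 := by rw [hw, neg_mul, inv_mul_cancel₀ hz0.ne]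
  have hwpos : 0 < w := by rw [hw]; exact neg_pos.2 (inv_lt_zero.2 hz0)
  have hw4 : w < 1 / 4 := by nlinarith
  rw [hzw, neg_neg]
  have hE : Real.exp w < 3 := by
    have := Real.exp_lt_exp.2 (show w < 1 by linarith)
    have := Real.exp_one_lt_d9
    linarith
  have hE0 := Real.exp_pos w
  generalize Real.exp w = E at *
  have hw2 : w ^ 2 ≤ 1 / 16 := by nlinarith
  have hEw : E * w ^ 2 ≤ 3 / 16 := by nlinarith
  have hEw0 : 0 < E * w ^ 2 := by positivity
  refine ⟨⟨by simpa using hEw0, ?_⟩, ?_⟩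
  · have hs : Real.sqrt 2 ≤ 2 := Real.sqrt_le_iff.2 ⟨by norm_num, by norm_num⟩
    have : (1:ℝ) / 2 ≤ 1 / Real.sqrt 2 :=
      one_div_le_one_div_of_le (by positivity) hs
    rw [neg_sq]
    linarith
  · have hk : (E * w ^ 2) ^ 2 ≤ 1 := by nlinarith
    have hk2 : 0 < 2 - w - 2 * w * (E * w ^ 2) ^ 2 := by nlinarith
    have : 0 < E ^ 2 * w ^ 3 * (2 - w - 2 * w * (E * w ^ 2) ^ 2) := by positivity
    nlinarith
end

section
/- Let r : (−∞,b̃) → ℝ be smooth and satisfy Setting RS, i.e. for every z < b̃: r(z) > 0, 0 < r'(z) ≤ 1/√2 and r(z)·r''(z) > 2·r'(z)²·(r'(z)²+1). Define G(z) = r'(z)/(r(z)·(r'(z)²+1)). Then G'(z) = ( r(z)r''(z)(1−r'(z)²) − r'(z)²(r'(z)²+1) ) / ( r(z)²(r'(z)²+1)² ) and G'(z) > 0 for every z < b̃; in particular G is strictly increasing on (−∞,b̃). -/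
/-- Under Setting RS on `(−∞, b̃)` (i.e. `r > 0`, `0 < r' ≤ 1/√2` and
`r r'' > 2 r'² (r'²+1)` there), the function `G(z) = r'(z)/(r(z)(r'(z)²+1))` has derivative
`G'(z) = ( r r'' (1−r'²) − r'² (r'²+1) ) / ( r² (r'²+1)² ) > 0` at every `z < b̃`;
in particular `G` is strictly increasing on `(−∞, b̃)`. -/
theorem G_strictMono (r : ℝ → ℝ) (btilde : ℝ)
    (hr : ContDiffOn ℝ (⊤ : ℕ∞) r (Set.Iio btilde))
    (hRS : ∀ z < btilde, 0 < r z ∧ (0 < deriv r z ∧ deriv r z ≤ 1 / Real.sqrt 2) ∧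
      r z * deriv (deriv r) z > 2 * (deriv r z) ^ 2 * ((deriv r z) ^ 2 + 1)) :
    let G : ℝ → ℝ := fun z => deriv r z / (r z * ((deriv r z) ^ 2 + 1))
    (∀ z < btilde,
      deriv G z = (r z * deriv (deriv r) z * (1 - (deriv r z) ^ 2)
            - (deriv r z) ^ 2 * ((deriv r z) ^ 2 + 1))
          / ((r z) ^ 2 * ((deriv r z) ^ 2 + 1) ^ 2) ∧
      0 < deriv G z) ∧
    StrictMonoOn G (Set.Iio btilde) := by
  intro G
  have hsq : ∀ z < btilde, (deriv r z) ^ 2 ≤ 1 / 2 := by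
    intro z hz
    obtain ⟨_, ⟨hp, hp2⟩, _⟩ := hRS z hz
    calc (deriv r z) ^ 2 ≤ (1 / Real.sqrt 2) ^ 2 := pow_le_pow_left₀ hp.le hp2 2
      _ = 1 / 2 := by rw [div_pow, Real.sq_sqrt (by norm_num)]; norm_num
  have hG : ∀ z < btilde, HasDerivAt G ((r z * deriv (deriv r) z * (1 - (deriv r z) ^ 2)
            - (deriv r z) ^ 2 * ((deriv r z) ^ 2 + 1))
          / ((r z) ^ 2 * ((deriv r z) ^ 2 + 1) ^ 2)) z := by
    intro z hz
    obtain ⟨h0, _, _⟩ := hRS z hz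
    have hd : ContDiffOn ℝ 1 (deriv r) (Set.Iio btilde) :=
      hr.deriv_of_isOpen isOpen_Iio (by norm_cast)
    have h1 : HasDerivAt r (deriv r z) z :=
      ((hr.differentiableOn (by simp)).differentiableAt (Iio_mem_nhds hz)).hasDerivAt
    have h2 : HasDerivAt (deriv r) (deriv (deriv r) z) z :=
      ((hd.differentiableOn (by simp)).differentiableAt (Iio_mem_nhds hz)).hasDerivAt
    have hq : (deriv r z) ^ 2 + 1 ≠ 0 := by positivity
    have h3 := h2.fun_div (h1.fun_mul ((h2.fun_pow 2).add_const 1)) (mul_ne_zero h0.ne' hq)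
    refine h3.congr_deriv ?_
    rw [mul_pow]
    congr 1
    push_cast
    ring
  have hpos : ∀ z < btilde, 0 < deriv G z := by
    intro z hz
    obtain ⟨h0, ⟨hp, _⟩, h⟩ := hRS z hz
    rw [(hG z hz).deriv]
    have h4 := hsq z hz
    apply div_pos _ (by positivity)
    have h5 : 0 < r z * deriv (deriv r) z := lt_trans (by positivity) h
    nlinarith [mul_nonneg h5.le (sub_nonneg.2 h4)]
  refine ⟨fun z hz => ⟨(hG z hz).deriv, hpos z hz⟩, ?_⟩
  apply strictMonoOn_of_deriv_pos (convex_Iio _)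
  · intro z hz
    exact (hG z hz).continuousAt.continuousWithinAt
  · intro z hz
    rw [interior_Iio] at hz
    exact hpos z hz
end

section
/- Let r : (−∞,b̃) → ℝ be smooth and satisfy Setting RS, i.e. for every z < b̃: r(z) > 0, 0 < r'(z) ≤ 1/√2 and r(z)·r''(z) > 2·r'(z)²·(r'(z)²+1). Then 𝒦(z) = r'(z)/(r(z)√(r'(z)²+1)) tends to 0 as z → −∞. (In fact already r'(z)/r(z) → 0 as z → −∞.) -/
/-- Under Setting RS on `(−∞, b̃)`, the parallel-circle curvature
`𝒦(z) = r'(z)/(r(z)√(r'(z)²+1))` tends to `0` as `z → −∞`; in fact already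
`r'(z)/r(z) → 0` as `z → −∞`. -/
theorem K_tendsto_zero (r : ℝ → ℝ) (btilde : ℝ)
    (hr : ContDiffOn ℝ (⊤ : ℕ∞) r (Set.Iio btilde))
    (hRS : ∀ z < btilde, 0 < r z ∧ (0 < deriv r z ∧ deriv r z ≤ 1 / Real.sqrt 2) ∧
      r z * deriv (deriv r) z > 2 * (deriv r z) ^ 2 * ((deriv r z) ^ 2 + 1)) :
    Filter.Tendsto (fun z => deriv r z / r z) Filter.atBot (nhds 0) ∧
    Filter.Tendsto (fun z => deriv r z / (r z * Real.sqrt ((deriv r z) ^ 2 + 1)))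
      Filter.atBot (nhds 0) := by
  have hdiff : ∀ z < btilde, DifferentiableAt ℝ r z := fun z hz =>
    (hr.differentiableOn (by simp)).differentiableAt (Iio_mem_nhds hz)
  have hdiff2 : ∀ z < btilde, DifferentiableAt ℝ (deriv r) z := fun z hz => by
    have h2 : ContDiffOn ℝ 1 (deriv r) (Set.Iio btilde) :=
      hr.deriv_of_isOpen isOpen_Iio (by norm_cast)
    exact (h2.differentiableOn (by simp)).differentiableAt (Iio_mem_nhds hz)
  have hd : ∀ z < btilde, HasDerivAt (fun z => r z / deriv r z + z)
      ((deriv r z * deriv r z - r z * deriv (deriv r) z) / (deriv r z) ^ 2 + 1) z :=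
    fun z hz => ((hdiff z hz).hasDerivAt.div (hdiff2 z hz).hasDerivAt
      (hRS z hz).2.1.1.ne').add (hasDerivAt_id z)
  have hanti : AntitoneOn (fun z => r z / deriv r z + z) (Set.Iio btilde) := by
    apply antitoneOn_of_deriv_nonpos (convex_Iio _)
    · exact fun z hz => (hd z hz).continuousAt.continuousWithinAt
    · rw [interior_Iio]
      exact fun z hz => (hd z hz).differentiableAt.differentiableWithinAt
    · rw [interior_Iio]
      intro z hz
      rw [(hd z hz).deriv]
      obtain ⟨h0, ⟨h1, -⟩, h3⟩ := hRS z hz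
      have : (deriv r z * deriv r z - r z * deriv (deriv r) z) / (deriv r z) ^ 2 ≤ -1 := by
        rw [div_le_iff₀ (by positivity)]
        nlinarith [sq_nonneg ((deriv r z) ^ 2)]
      linarith
  have htop : Filter.Tendsto (fun z => r z / deriv r z) Filter.atBot Filter.atTop := by
    have hlin : Filter.Tendsto
        (fun z : ℝ => (r (btilde - 1) / deriv r (btilde - 1) + (btilde - 1)) + -z)
        Filter.atBot Filter.atTop :=
      Filter.tendsto_atTop_add_const_left _ _ Filter.tendsto_neg_atBot_atTop
    refine Filter.tendsto_atTop_mono' _ ?_ hlin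
    filter_upwards [Filter.eventually_le_atBot (btilde - 1)] with z hz
    have := hanti (show z < btilde by linarith) (show btilde - 1 < btilde by linarith) hz
    simp only at this
    linarith
  have hfirst : Filter.Tendsto (fun z => deriv r z / r z) Filter.atBot (nhds 0) := by
    have := htop.inv_tendsto_atTop
    refine this.congr fun z => ?_
    simp [inv_div]
  refine ⟨hfirst, ?_⟩
  refine tendsto_of_tendsto_of_tendsto_of_le_of_le' tendsto_const_nhds hfirst ?_ ?_
  · filter_upwards [Filter.eventually_lt_atBot btilde] with z hz
    obtain ⟨h0, ⟨h1, -⟩, -⟩ := hRS z hz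
    positivity
  · filter_upwards [Filter.eventually_lt_atBot btilde] with z hz
    obtain ⟨h0, ⟨h1, -⟩, -⟩ := hRS z hz
    have hs : 1 ≤ Real.sqrt ((deriv r z) ^ 2 + 1) := by
      rw [Real.one_le_sqrt]
      nlinarith [sq_nonneg (deriv r z)]
    exact div_le_div_of_nonneg_left h1.le h0 (le_mul_of_one_le_right h0.le hs)
end

section
/- Let r : (−∞,b̃) → ℝ be smooth and satisfy Setting RS, i.e. for every z < b̃: r(z) > 0, 0 < r'(z) ≤ 1/√2 and r(z)·r''(z) > 2·r'(z)²·(r'(z)²+1). Let z : [0,∞) → (−∞,b̃) be differentiable and satisfy the ODE z'(t) = −r'(z(t))/( r(z(t))·(r'(z(t))²+1) ) for all t ≥ 0. Then z(t) → −∞ as t → ∞. -/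
/-- Under Setting RS on `(−∞, b̃)`, any solution `z : [0,∞) → (−∞, b̃)` of the ODE
`z'(t) = −r'(z(t))/( r(z(t))(r'(z(t))²+1) )` (the curve shortening flow of the parallel
circles) tends to `−∞` as `t → ∞`. -/
theorem circle_flow_tendsto_atBot (r : ℝ → ℝ) (btilde : ℝ)
    (hr : ContDiffOn ℝ (⊤ : ℕ∞) r (Set.Iio btilde))
    (hRS : ∀ w < btilde, 0 < r w ∧ (0 < deriv r w ∧ deriv r w ≤ 1 / Real.sqrt 2) ∧
      r w * deriv (deriv r) w > 2 * (deriv r w) ^ 2 * ((deriv r w) ^ 2 + 1))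
    (z : ℝ → ℝ) (hz : ∀ t ≥ (0 : ℝ), z t < btilde)
    (hode : ∀ t ≥ (0 : ℝ),
      HasDerivWithinAt z
        (-(deriv r (z t) / (r (z t) * ((deriv r (z t)) ^ 2 + 1)))) (Set.Ici 0) t) :
    Filter.Tendsto z Filter.atTop Filter.atBot := by
  set G : ℝ → ℝ := fun w => deriv r w / (r w * ((deriv r w) ^ 2 + 1)) with hG
  have hGpos : ∀ w < btilde, 0 < G w := by
    intro w hw
    obtain ⟨h1, ⟨h2, _⟩, _⟩ := hRS w hw
    simp only [hG]
    positivity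
  have hdc : ContinuousOn (deriv r) (Set.Iio btilde) :=
    hr.continuousOn_deriv_of_isOpen isOpen_Iio (by exact_mod_cast le_top)
  have hGc : ContinuousOn G (Set.Iio btilde) := by
    refine hdc.div (hr.continuousOn.mul ((hdc.pow 2).add continuousOn_const)) ?_
    intro w hw
    have h1 := (hRS w hw).1
    positivity
  have hzc : ContinuousOn z (Set.Ici 0) := fun t ht => (hode t ht).continuousWithinAt
  have key : ∀ m : ℝ, (∀ t ≥ (0 : ℝ), m ≤ G (z t)) →
      AntitoneOn (fun t => z t + m * t) (Set.Ici 0) := by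
    intro m hm
    refine antitoneOn_of_hasDerivWithinAt_nonpos (f' := fun t => -G (z t) + m * 1)
      (convex_Ici 0) (by fun_prop) ?_ ?_
    · intro t ht
      have ht0 : (0 : ℝ) ≤ t := interior_subset ht
      exact ((hode t ht0).mono interior_subset).add ((hasDerivWithinAt_id t _).const_mul m)
    · intro t ht
      have ht0 : (0 : ℝ) ≤ t := interior_subset ht
      have := hm t ht0
      linarith
  have hanti : AntitoneOn z (Set.Ici 0) := by
    have := key 0 (fun t ht => (hGpos _ (hz t ht)).le)
    simpa using this
  rw [Filter.tendsto_atBot]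
  intro M
  by_cases hex : ∃ t ≥ (0 : ℝ), z t ≤ M
  · obtain ⟨t, ht, htM⟩ := hex
    filter_upwards [Filter.eventually_ge_atTop t] with s hs
    exact (hanti (Set.mem_Ici.2 ht) (Set.mem_Ici.2 (le_trans ht hs)) hs).trans htM
  · exfalso
    push Not at hex
    have hmem : ∀ t ≥ (0 : ℝ), z t ∈ Set.Icc M (z 0) := fun t ht =>
      ⟨(hex t ht).le, hanti (Set.mem_Ici.2 le_rfl) (Set.mem_Ici.2 ht) ht⟩
    have hsub : Set.Icc M (z 0) ⊆ Set.Iio btilde := fun w hw =>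
      lt_of_le_of_lt hw.2 (hz 0 le_rfl)
    obtain ⟨w, hw, hmin⟩ := isCompact_Icc.exists_isMinOn ⟨z 0, hmem 0 le_rfl⟩ (hGc.mono hsub)
    have hpos := hGpos w (hsub hw)
    have h := key (G w) (fun t ht => hmin (hmem t ht))
    have hM0 := hex 0 le_rfl
    have ht : 0 ≤ (z 0 - M) / G w := div_nonneg (by linarith) hpos.le
    have h2 := h (Set.mem_Ici.2 le_rfl) (Set.mem_Ici.2 ht) ht
    have h3 := hex _ ht
    simp only at h2
    rw [mul_div_cancel₀ _ hpos.ne'] at h2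
    linarith
end

section
/- Let X be a compact topological space, T > 0, and ρ : X × (0,T) → ℝ a continuous function whose partial derivative ∂ρ/∂t exists and is continuous on X × (0,T). Define ρ_max(t) = max_{x∈X} ρ(x,t) and ρ_min(t) = min_{x∈X} ρ(x,t). Then ρ_max and ρ_min are locally Lipschitz on (0,T); moreover, for every t ∈ (0,T) at which ρ_max is differentiable and every x ∈ X with ρ(x,t) = ρ_max(t), one has ρ_max'(t) = ∂ρ/∂t(x,t), and the analogous identity holds for ρ_min at its minimizers. -/
/-- Hamilton's trick: if `X` is a compact space and `ρ : X × (0,T) → ℝ` is continuous with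
continuous time derivative `∂ρ/∂t`, then `ρ_max(t) = max_x ρ(x,t)` and
`ρ_min(t) = min_x ρ(x,t)` are locally Lipschitz on `(0,T)`, and at every time `t` where
`ρ_max` (resp. `ρ_min`) is differentiable and every point `x` realizing the maximum
(resp. minimum), `ρ_max'(t) = ∂ρ/∂t(x,t)` (resp. for `ρ_min`). -/
theorem hamilton_trick {X : Type*} [TopologicalSpace X] [CompactSpace X] [Nonempty X]
    (T : ℝ) (hT : 0 < T) (ρ ρt : X → ℝ → ℝ)
    (hcont : ContinuousOn (fun q : X × ℝ => ρ q.1 q.2) (Set.univ ×ˢ Set.Ioo 0 T))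
    (hderiv : ∀ x, ∀ t ∈ Set.Ioo (0 : ℝ) T, HasDerivAt (ρ x) (ρt x t) t)
    (htcont : ContinuousOn (fun q : X × ℝ => ρt q.1 q.2) (Set.univ ×ˢ Set.Ioo 0 T)) :
    let ρmax : ℝ → ℝ := fun t => ⨆ x, ρ x t
    let ρmin : ℝ → ℝ := fun t => ⨅ x, ρ x t
    (∀ t ∈ Set.Ioo (0 : ℝ) T, ∃ K : NNReal, ∃ U ∈ nhdsWithin t (Set.Ioo 0 T),
      LipschitzOnWith K ρmax U ∧ LipschitzOnWith K ρmin U) ∧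
    (∀ t ∈ Set.Ioo (0 : ℝ) T, DifferentiableAt ℝ ρmax t →
      ∀ x, ρ x t = ρmax t → deriv ρmax t = ρt x t) ∧
    (∀ t ∈ Set.Ioo (0 : ℝ) T, DifferentiableAt ℝ ρmin t →
      ∀ x, ρ x t = ρmin t → deriv ρmin t = ρt x t) := by
  intro ρmax ρmin
  have hx : ∀ t ∈ Set.Ioo (0 : ℝ) T, Continuous (fun x => ρ x t) := by
    intro t ht
    have h := hcont.comp_continuous (f := fun x : X => (x, t)) (by fun_prop)
      (fun x => ⟨Set.mem_univ _, ht⟩)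
    exact h
  have hA : ∀ t ∈ Set.Ioo (0 : ℝ) T, BddAbove (Set.range (fun x => ρ x t)) :=
    fun t ht => (isCompact_range (hx t ht)).bddAbove
  have hB : ∀ t ∈ Set.Ioo (0 : ℝ) T, BddBelow (Set.range (fun x => ρ x t)) :=
    fun t ht => (isCompact_range (hx t ht)).bddBelow
  refine ⟨?_, ?_, ?_⟩
  · intro t ht
    obtain ⟨a, ha0, hat⟩ := exists_between ht.1
    obtain ⟨b, htb, hbT⟩ := exists_between ht.2
    have hsub : Set.Icc a b ⊆ Set.Ioo 0 T := fun s hs =>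
      ⟨lt_of_lt_of_le ha0 hs.1, lt_of_le_of_lt hs.2 hbT⟩
    have hK : IsCompact ((Set.univ : Set X) ×ˢ Set.Icc a b) := isCompact_univ.prod isCompact_Icc
    obtain ⟨C, hC⟩ := hK.exists_bound_of_continuousOn
      (htcont.mono (Set.prod_mono le_rfl hsub))
    have hLip : ∀ x, LipschitzOnWith C.toNNReal (ρ x) (Set.Icc a b) := by
      intro x
      refine (convex_Icc a b).lipschitzOnWith_of_nnnorm_hasDerivWithin_le
        (f' := ρt x) (fun s hs => (hderiv x s (hsub hs)).hasDerivWithinAt) ?_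
      intro s hs
      rw [← norm_toNNReal]
      exact Real.toNNReal_le_toNNReal (hC (x, s) ⟨Set.mem_univ _, hs⟩)
    have hle : ∀ x, ∀ s ∈ Set.Icc a b, ∀ r ∈ Set.Icc a b,
        ρ x s ≤ ρ x r + C.toNNReal * dist s r := fun x s hs r hr =>
      (hLip x).le_add_mul hs hr
    refine ⟨C.toNNReal, Set.Icc a b, mem_nhdsWithin_of_mem_nhds (Icc_mem_nhds hat htb), ?_, ?_⟩
    · refine LipschitzOnWith.of_le_add_mul _ fun s hs r hr => ?_
      refine ciSup_le fun x => (hle x s hs r hr).trans ?_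
      have := le_ciSup (hA r (hsub hr)) x
      exact add_le_add_left this _
    · refine LipschitzOnWith.of_le_add_mul _ fun s hs r hr => ?_
      rw [← sub_le_iff_le_add]
      refine le_ciInf fun x => ?_
      have h1 := ciInf_le (hB s (hsub hs)) x
      have h2 := hle x s hs r hr
      rw [sub_le_iff_le_add]
      exact h1.trans h2
  · intro t ht hd x hxt
    have hm : IsLocalMax (fun s => ρ x s - ρmax s) t := by
      filter_upwards [Ioo_mem_nhds ht.1 ht.2] with s hs
      have h1 : ρ x s ≤ ρmax s := le_ciSup (hA s hs) x
      linarith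
    have := hm.hasDerivAt_eq_zero ((hderiv x t ht).sub hd.hasDerivAt)
    linarith
  · intro t ht hd x hxt
    have hm : IsLocalMin (fun s => ρ x s - ρmin s) t := by
      filter_upwards [Ioo_mem_nhds ht.1 ht.2] with s hs
      have h1 : ρmin s ≤ ρ x s := ciInf_le (hB s hs) x
      linarith
    have := hm.hasDerivAt_eq_zero ((hderiv x t ht).sub hd.hasDerivAt)
    linarith
end
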